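/- arXiv:1412.3025 — 2 statements merged into one kernel-verified Lean document; each statement's English description precedes it below -/
import Mathlib

section
/- Let M be a right-cancellative monoid and E ⊆ M∖{1} a generating set. Then a factorization map η on (M,E) is a factorability structure if and only if it is a weak factorability structure. -/
/-- The word length of `m` with respect to the generating set `E`:
the least `n` such that `m` is a product of `n` elements of `E`. -/
noncomputable def wordLength {M : Type*} [Monoid M] (E : Set M) (m : M) : ℕ :=
  sInf {n | ∃ l : List M, (∀ x ∈ l, x ∈ E) ∧ l.length = n ∧ l.prod = m}

/-- `E` is a generating set of the monoid `M`. -/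
def IsGenSet {M : Type*} [Monoid M] (E : Set M) : Prop :=
  ∀ m : M, ∃ l : List M, (∀ x ∈ l, x ∈ E) ∧ l.prod = m

/-- The pair `(a, b)` is geodesic with respect to `E`. -/
noncomputable def Geodesic {M : Type*} [Monoid M] (E : Set M) (a b : M) : Prop :=
  wordLength E (a * b) = wordLength E a + wordLength E b

/-- A factorization map `η = (η̄, η′)` on `(M, E)`. -/
noncomputable def IsFactorizationMap {M : Type*} [Monoid M] (E : Set M)
    (η : M → M × M) : Prop :=
  (∀ m, (η m).1 * (η m).2 = m) ∧
  (∀ m, wordLength E m = wordLength E (η m).1 + wordLength E (η m).2) ∧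
  (∀ m, m ≠ 1 → (η m).2 ∈ E) ∧
  η 1 = (1, 1)

/-- The map `f₁ : M³ → M³` applying `η` to the product of the two right entries,
with triples written `(x₃, x₂, x₁)`. -/
def f1 {M : Type*} [Monoid M] (η : M → M × M) (p : M × M × M) : M × M × M :=
  (p.1, η (p.2.1 * p.2.2))

/-- The map `f₂ : M³ → M³` applying `η` to the product of the two left entries. -/
def f2 {M : Type*} [Monoid M] (η : M → M × M) (p : M × M × M) : M × M × M :=
  ((η (p.1 * p.2.1)).1, (η (p.1 * p.2.1)).2, p.2.2)

/-- The sum of the word lengths of the entries of a triple. -/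
noncomputable def tnorm {M : Type*} [Monoid M] (E : Set M) (p : M × M × M) : ℕ :=
  wordLength E p.1 + wordLength E p.2.1 + wordLength E p.2.2

/-- `η` is a factorability structure on `(M, E)`: it is a factorization map and the
three maps `f₁f₂f₁f₂`, `f₂f₁f₂`, `f₂f₁f₂f₁ : M³ → M³` are equal in the graded sense. -/
noncomputable def IsFactorable {M : Type*} [Monoid M] (E : Set M) (η : M → M × M) : Prop :=
  IsFactorizationMap E η ∧
  ∀ p : M × M × M,
    (f1 η (f2 η (f1 η (f2 η p))) = f2 η (f1 η (f2 η p)) ∧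
     f2 η (f1 η (f2 η p)) = f2 η (f1 η (f2 η (f1 η p)))) ∨
    (tnorm E (f1 η (f2 η (f1 η (f2 η p)))) < tnorm E p ∧
     tnorm E (f2 η (f1 η (f2 η p))) < tnorm E p ∧
     tnorm E (f2 η (f1 η (f2 η (f1 η p)))) < tnorm E p)

/-- `η` is a weak factorability structure on `(M, E)`. -/
noncomputable def IsWeaklyFactorable {M : Type*} [Monoid M] (E : Set M)
    (η : M → M × M) : Prop :=
  IsFactorizationMap E η ∧
  ∀ x : M, ∀ t ∈ E,
    Geodesic E (η x).2 t →
    Geodesic E (η x).1 (η ((η x).2 * t)).1 →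
    Geodesic E x t ∧
    (η (x * t)).2 = (η ((η x).2 * t)).2 ∧
    (η (x * t)).1 = (η x).1 * (η ((η x).2 * t)).1

/-- `η` satisfies the recognition principle. -/
def RecognitionPrinciple {M : Type*} [Monoid M] (E : Set M) (η : M → M × M) : Prop :=
  ∀ m : M, ∀ a ∈ E, (η (m * a) = (m, a) ↔ η ((η m).2 * a) = ((η m).2, a))

/-!
Call a triple geodesic if the sum of the word lengths of its entries is the word length of its
product. For a weak factorability structure the defining formula for `η (x * t)` with `t ∈ E`
propagates, one letter at a time along a geodesic word for `y`, to all geodesic products `x * y`.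
Consequently `f₂f₁f₂` sends a geodesic triple to the triple `((η̄η̄)(m), (η′η̄)(m), η′(m))` of its
product `m`, and strictly shortens every other triple. Hence `f₂f₁f₂` and `f₂f₁f₂f₁` always agree
in the graded sense, and factorability amounts to `f₁` fixing these triples, which is the
recognition principle. Conversely, evaluating the factorability identities at `(x, t, 1)` gives
the weak formula, and evaluating them at `(m, 1, 1)` gives the recognition principle. Finally,
when `η (m * a) = (m, a)` and `η` is a weak factorability structure, `η′(m) * a` factors as
`(η̄(η′(m) * a), a)`, and cancelling `a` on the right yields the recognition principle.
-/

section WordLength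

variable {M : Type*} [Monoid M] {E : Set M}

theorem wordLength_prod_le_length {l : List M} (hl : ∀ x ∈ l, x ∈ E) :
    wordLength E l.prod ≤ l.length :=
  Nat.sInf_le ⟨l, hl, rfl, rfl⟩

theorem wordLength_le_one_of_mem {t : M} (ht : t ∈ E) : wordLength E t ≤ 1 := by
  simpa using wordLength_prod_le_length (E := E) (l := [t]) (by simpa using ht)

theorem wordLength_one : wordLength E (1 : M) = 0 :=
  Nat.le_zero.mp (wordLength_prod_le_length (l := []) (by simp))

theorem IsGenSet.exists_list_length_eq_wordLength (hgen : IsGenSet E) (m : M) :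
    ∃ l : List M, (∀ x ∈ l, x ∈ E) ∧ l.length = wordLength E m ∧ l.prod = m := by
  obtain ⟨l, hl, hm⟩ := hgen m
  exact Nat.sInf_mem (s := {n | ∃ l : List M, (∀ x ∈ l, x ∈ E) ∧ l.length = n ∧ l.prod = m})
    ⟨l.length, l, hl, rfl, hm⟩

theorem IsGenSet.wordLength_mul_le (hgen : IsGenSet E) (a b : M) :
    wordLength E (a * b) ≤ wordLength E a + wordLength E b := by
  obtain ⟨l, hl, hla, rfl⟩ := hgen.exists_list_length_eq_wordLength a
  obtain ⟨k, hk, hkb, rfl⟩ := hgen.exists_list_length_eq_wordLength b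
  rw [← hla, ← hkb, ← List.prod_append, ← List.length_append]
  exact wordLength_prod_le_length fun x hx => (List.mem_append.mp hx).elim (hl x) (hk x)

theorem IsGenSet.eq_one_of_wordLength_eq_zero (hgen : IsGenSet E) {m : M}
    (hm : wordLength E m = 0) : m = 1 := by
  obtain ⟨l, -, hlm, rfl⟩ := hgen.exists_list_length_eq_wordLength m
  rw [List.length_eq_zero_iff.mp (hlm.trans hm), List.prod_nil]

theorem IsGenSet.wordLength_eq_one_of_mem (hgen : IsGenSet E) (h1 : (1 : M) ∉ E) {t : M}
    (ht : t ∈ E) : wordLength E t = 1 :=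
  le_antisymm (wordLength_le_one_of_mem ht) <| Nat.one_le_iff_ne_zero.mpr fun h =>
    h1 (hgen.eq_one_of_wordLength_eq_zero h ▸ ht)

theorem geodesic_one_right (a : M) : Geodesic E a 1 := by
  rw [Geodesic, mul_one, wordLength_one, add_zero]

theorem IsGenSet.geodesic_assoc (hgen : IsGenSet E) {a b c : M} :
    Geodesic E a b ∧ Geodesic E (a * b) c ↔ Geodesic E b c ∧ Geodesic E a (b * c) := by
  have hab := hgen.wordLength_mul_le a b
  have hbc := hgen.wordLength_mul_le b c
  have hab_c := hgen.wordLength_mul_le (a * b) c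
  have ha_bc := hgen.wordLength_mul_le a (b * c)
  unfold Geodesic
  rw [mul_assoc] at *
  omega

@[elab_as_elim]
theorem IsGenSet.geodesic_induction (hgen : IsGenSet E) {motive : M → Prop} (one : motive 1)
    (mul : ∀ w, ∀ t ∈ E, Geodesic E w t → motive w → motive (w * t)) (y : M) : motive y := by
  obtain ⟨l, hl, hlen, rfl⟩ := hgen.exists_list_length_eq_wordLength y
  induction l using List.reverseRecOn with
  | nil => exact one
  | append_singleton k t ih =>
    simp only [List.forall_mem_append, List.forall_mem_singleton] at hl
    simp only [List.prod_append, List.prod_singleton, List.length_append,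
      List.length_singleton] at hlen ⊢
    have hk := wordLength_prod_le_length hl.1
    have ht := wordLength_le_one_of_mem hl.2
    have hkt := hgen.wordLength_mul_le k.prod t
    exact mul _ t hl.2 (by unfold Geodesic; omega) (ih hl.1 (by omega))

end WordLength

section Triples

variable {M : Type*} [Monoid M]

/-- The product `x₃x₂x₁` of the entries of a triple `(x₃, x₂, x₁)`. -/
def tripleProd (p : M × M × M) : M :=
  p.1 * p.2.1 * p.2.2

/-- A triple is geodesic if no length is lost in multiplying out its entries, that is, if it is
not shortened by any sequence of multiplications and factorizations. -/
def IsGeodesicTriple (E : Set M) (p : M × M × M) : Prop :=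
  tnorm E p = wordLength E (tripleProd p)

/-- The triple consisting of the last two letters of the `η`-normal form of `m`, in the middle and
on the right, preceded by the remaining factor. -/
def normalTriple (η : M → M × M) (m : M) : M × M × M :=
  ((η (η m).1).1, (η (η m).1).2, (η m).2)

variable {E : Set M}

theorem IsGenSet.wordLength_tripleProd_le_tnorm (hgen : IsGenSet E) (p : M × M × M) :
    wordLength E (tripleProd p) ≤ tnorm E p :=
  (hgen.wordLength_mul_le _ _).trans (Nat.add_le_add_right (hgen.wordLength_mul_le _ _) _)

theorem IsGenSet.isGeodesicTriple_iff (hgen : IsGenSet E) {p : M × M × M} :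
    IsGeodesicTriple E p ↔ Geodesic E p.1 p.2.1 ∧ Geodesic E (p.1 * p.2.1) p.2.2 := by
  have := hgen.wordLength_mul_le p.1 p.2.1
  have := hgen.wordLength_mul_le (p.1 * p.2.1) p.2.2
  unfold IsGeodesicTriple Geodesic tnorm tripleProd
  omega

end Triples

namespace IsFactorizationMap

variable {M : Type*} [Monoid M] {E : Set M} {η : M → M × M}

theorem fst_mul_snd (hη : IsFactorizationMap E η) (m : M) : (η m).1 * (η m).2 = m :=
  hη.1 m

theorem wordLength_fst_add_snd (hη : IsFactorizationMap E η) (m : M) :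
    wordLength E (η m).1 + wordLength E (η m).2 = wordLength E m :=
  (hη.2.1 m).symm

theorem snd_mem (hη : IsFactorizationMap E η) {m : M} (hm : m ≠ 1) : (η m).2 ∈ E :=
  hη.2.2.1 m hm

theorem apply_one (hη : IsFactorizationMap E η) : η 1 = (1, 1) :=
  hη.2.2.2

theorem geodesic_fst_snd (hη : IsFactorizationMap E η) (m : M) :
    Geodesic E (η m).1 (η m).2 := by
  rw [Geodesic, hη.fst_mul_snd, hη.wordLength_fst_add_snd]

theorem apply_of_mem (hη : IsFactorizationMap E η) (hgen : IsGenSet E) (h1 : (1 : M) ∉ E)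
    {t : M} (ht : t ∈ E) : η t = (1, t) := by
  have hsnd : (η t).2 ∈ E := hη.snd_mem fun h => h1 (h ▸ ht)
  have hlen := hη.wordLength_fst_add_snd t
  rw [hgen.wordLength_eq_one_of_mem h1 ht, hgen.wordLength_eq_one_of_mem h1 hsnd] at hlen
  have hfst : (η t).1 = 1 := hgen.eq_one_of_wordLength_eq_zero (by omega)
  refine Prod.ext hfst ?_
  simpa only [hfst, one_mul] using hη.fst_mul_snd t

theorem apply_snd (hη : IsFactorizationMap E η) (hgen : IsGenSet E) (h1 : (1 : M) ∉ E) (m : M) :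
    η (η m).2 = (1, (η m).2) := by
  by_cases hm : m = 1
  · rw [hm, hη.apply_one, hη.apply_one]
  · exact hη.apply_of_mem hgen h1 (hη.snd_mem hm)

theorem geodesic_of_geodesic_mul (hη : IsFactorizationMap E η) (hgen : IsGenSet E) {x y : M}
    (hxy : Geodesic E x y) :
    Geodesic E (η x).2 y ∧ Geodesic E (η x).1 (η ((η x).2 * y)).1 := by
  rw [← hη.fst_mul_snd x] at hxy
  obtain ⟨hsnd, hfst⟩ := hgen.geodesic_assoc.mp ⟨hη.geodesic_fst_snd x, hxy⟩
  rw [← hη.fst_mul_snd ((η x).2 * y)] at hfst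
  exact ⟨hsnd, (hgen.geodesic_assoc.mpr ⟨hη.geodesic_fst_snd _, hfst⟩).1⟩

theorem tripleProd_f1 (hη : IsFactorizationMap E η) (p : M × M × M) :
    tripleProd (f1 η p) = tripleProd p := by
  simp only [tripleProd, f1, mul_assoc, hη.fst_mul_snd]

theorem tnorm_f1 (hη : IsFactorizationMap E η) (p : M × M × M) :
    tnorm E (f1 η p) = wordLength E p.1 + wordLength E (p.2.1 * p.2.2) := by
  simp only [tnorm, f1, add_assoc, hη.wordLength_fst_add_snd]

theorem tnorm_f2 (hη : IsFactorizationMap E η) (p : M × M × M) :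
    tnorm E (f2 η p) = wordLength E (p.1 * p.2.1) + wordLength E p.2.2 := by
  simp only [tnorm, f2, hη.wordLength_fst_add_snd]

theorem tnorm_f1_le (hη : IsFactorizationMap E η) (hgen : IsGenSet E) (p : M × M × M) :
    tnorm E (f1 η p) ≤ tnorm E p := by
  rw [hη.tnorm_f1, tnorm, add_assoc]
  exact Nat.add_le_add_left (hgen.wordLength_mul_le _ _) _

theorem tnorm_f2_le (hη : IsFactorizationMap E η) (hgen : IsGenSet E) (p : M × M × M) :
    tnorm E (f2 η p) ≤ tnorm E p := by
  rw [hη.tnorm_f2, tnorm]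
  exact Nat.add_le_add_right (hgen.wordLength_mul_le _ _) _

theorem tnorm_f1_eq_iff (hη : IsFactorizationMap E η) {p : M × M × M} :
    tnorm E (f1 η p) = tnorm E p ↔ Geodesic E p.2.1 p.2.2 := by
  rw [hη.tnorm_f1, tnorm, add_assoc, Nat.add_left_cancel_iff, Geodesic]

theorem tnorm_f2_eq_iff (hη : IsFactorizationMap E η) {p : M × M × M} :
    tnorm E (f2 η p) = tnorm E p ↔ Geodesic E p.1 p.2.1 := by
  rw [hη.tnorm_f2, tnorm, Nat.add_right_cancel_iff, Geodesic]

theorem isGeodesicTriple_f1 (hη : IsFactorizationMap E η) (hgen : IsGenSet E) {p : M × M × M}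
    (hp : IsGeodesicTriple E p) : IsGeodesicTriple E (f1 η p) := by
  refine le_antisymm ?_ (hgen.wordLength_tripleProd_le_tnorm _)
  rw [hη.tripleProd_f1, ← hp]
  exact hη.tnorm_f1_le hgen p

theorem tnorm_normalTriple (hη : IsFactorizationMap E η) (m : M) :
    tnorm E (normalTriple η m) = wordLength E m := by
  simp only [tnorm, normalTriple, hη.wordLength_fst_add_snd]

theorem f2_f1_f2_mk_one (hη : IsFactorizationMap E η) (hgen : IsGenSet E) (h1 : (1 : M) ∉ E)
    (x y : M) : f2 η (f1 η (f2 η (x, y, 1))) = normalTriple η (x * y) := by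
  simp only [f1, f2, normalTriple, mul_one, hη.apply_snd hgen h1]

theorem apply_eq_of_normalTriple_eq_f2 (hη : IsFactorizationMap E η) {m : M} {p : M × M × M}
    (h : normalTriple η m = f2 η p) : η m = (p.1 * p.2.1, p.2.2) := by
  simp only [normalTriple, f2, Prod.mk.injEq] at h
  obtain ⟨hleft, hmiddle, hright⟩ := h
  refine Prod.ext ?_ hright
  rw [← hη.fst_mul_snd (η m).1, hleft, hmiddle, hη.fst_mul_snd]

end IsFactorizationMap

theorem RecognitionPrinciple.f1_normalTriple {M : Type*} [Monoid M] {E : Set M}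
    {η : M → M × M} (hr : RecognitionPrinciple E η) (hη : IsFactorizationMap E η) (m : M) :
    f1 η (normalTriple η m) = normalTriple η m := by
  by_cases hm : m = 1
  · simp only [f1, normalTriple, hm, hη.apply_one, mul_one]
  · have happly : η ((η m).1 * (η m).2) = ((η m).1, (η m).2) := by rw [hη.fst_mul_snd]
    exact Prod.ext rfl ((hr _ _ (hη.snd_mem hm)).mp happly)

namespace IsWeaklyFactorable

variable {M : Type*} [Monoid M] {E : Set M} {η : M → M × M}

theorem isFactorizationMap (hw : IsWeaklyFactorable E η) : IsFactorizationMap E η :=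
  hw.1

theorem geodesic_and_apply_mul_of_mem (hw : IsWeaklyFactorable E η) {x t : M} (ht : t ∈ E)
    (hsnd : Geodesic E (η x).2 t) (hfst : Geodesic E (η x).1 (η ((η x).2 * t)).1) :
    Geodesic E x t ∧ η (x * t) = ((η x).1 * (η ((η x).2 * t)).1, (η ((η x).2 * t)).2) :=
  have ⟨hxt, hright, hleft⟩ := hw.2 x t ht hsnd hfst
  ⟨hxt, Prod.ext hleft hright⟩

theorem geodesic_and_apply_mul (hw : IsWeaklyFactorable E η) (hgen : IsGenSet E)
    (h1 : (1 : M) ∉ E) {x : M} (y : M) (hsnd : Geodesic E (η x).2 y)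
    (hfst : Geodesic E (η x).1 (η ((η x).2 * y)).1) :
    Geodesic E x y ∧ η (x * y) = ((η x).1 * (η ((η x).2 * y)).1, (η ((η x).2 * y)).2) := by
  have hη := hw.isFactorizationMap
  induction y using hgen.geodesic_induction with
  | one => simp [geodesic_one_right, hη.apply_snd hgen h1]
  | mul w t ht hwt ih =>
    obtain ⟨hsnd_w, hut⟩ := hgen.geodesic_assoc.mpr ⟨hwt, hsnd⟩
    rw [← mul_assoc] at hfst
    rw [← mul_assoc (η x).2 w t]
    set u := (η x).2 * w
    obtain ⟨hu_snd, hu_fst⟩ := hη.geodesic_of_geodesic_mul hgen hut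
    have happly_ut := (hw.geodesic_and_apply_mul_of_mem ht hu_snd hu_fst).2
    rw [happly_ut] at hfst ⊢
    obtain ⟨hfst_w, hfst_t⟩ := hgen.geodesic_assoc.mpr ⟨hu_fst, hfst⟩
    obtain ⟨hxw, happly_xw⟩ := ih hsnd_w hfst_w
    obtain ⟨hxw_t, happly_xwt⟩ := hw.geodesic_and_apply_mul_of_mem (x := x * w) ht
      (by rwa [happly_xw]) (by rwa [happly_xw])
    refine ⟨(hgen.geodesic_assoc.mp ⟨hxw, hxw_t⟩).2, ?_⟩
    rw [← mul_assoc, happly_xwt, happly_xw, mul_assoc]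

theorem apply_mul_of_geodesic (hw : IsWeaklyFactorable E η) (hgen : IsGenSet E)
    (h1 : (1 : M) ∉ E) {x y : M} (hxy : Geodesic E x y) :
    η (x * y) = ((η x).1 * (η ((η x).2 * y)).1, (η ((η x).2 * y)).2) :=
  have ⟨hsnd, hfst⟩ := hw.isFactorizationMap.geodesic_of_geodesic_mul hgen hxy
  (hw.geodesic_and_apply_mul hgen h1 y hsnd hfst).2

theorem f2_f1_f2_eq_normalTriple (hw : IsWeaklyFactorable E η) (hgen : IsGenSet E)
    (h1 : (1 : M) ∉ E) {p : M × M × M} (hp : IsGeodesicTriple E p) :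
    f2 η (f1 η (f2 η p)) = normalTriple η (tripleProd p) := by
  simp only [f1, f2, normalTriple, tripleProd,
    hw.apply_mul_of_geodesic hgen h1 (hgen.isGeodesicTriple_iff.mp hp).2]

theorem tnorm_f2_f1_f2_lt (hw : IsWeaklyFactorable E η) (hgen : IsGenSet E)
    (h1 : (1 : M) ∉ E) {p : M × M × M} (hp : ¬IsGeodesicTriple E p) :
    tnorm E (f2 η (f1 η (f2 η p))) < tnorm E p := by
  have hη := hw.isFactorizationMap
  contrapose! hp
  have hle₁ := hη.tnorm_f2_le hgen p
  have hle₂ := hη.tnorm_f1_le hgen (f2 η p)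
  have hle₃ := hη.tnorm_f2_le hgen (f1 η (f2 η p))
  have hleft := hη.tnorm_f2_eq_iff.mp (by omega : tnorm E (f2 η p) = tnorm E p)
  have hsnd := hη.tnorm_f1_eq_iff.mp
    (by omega : tnorm E (f1 η (f2 η p)) = tnorm E (f2 η p))
  have hfst := hη.tnorm_f2_eq_iff.mp
    (by omega : tnorm E (f2 η (f1 η (f2 η p))) = tnorm E (f1 η (f2 η p)))
  exact hgen.isGeodesicTriple_iff.mpr
    ⟨hleft, (hw.geodesic_and_apply_mul hgen h1 p.2.2 hsnd hfst).1⟩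

theorem tnorm_f2_f1_f2_f1_lt (hw : IsWeaklyFactorable E η) (hgen : IsGenSet E)
    (h1 : (1 : M) ∉ E) {p : M × M × M} (hp : ¬IsGeodesicTriple E p) :
    tnorm E (f2 η (f1 η (f2 η (f1 η p)))) < tnorm E p := by
  have hη := hw.isFactorizationMap
  by_cases hf1 : IsGeodesicTriple E (f1 η p)
  · rw [hw.f2_f1_f2_eq_normalTriple hgen h1 hf1, hη.tripleProd_f1, hη.tnorm_normalTriple]
    exact (hgen.wordLength_tripleProd_le_tnorm p).lt_of_ne' hp
  · exact (hw.tnorm_f2_f1_f2_lt hgen h1 hf1).trans_le (hη.tnorm_f1_le hgen p)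

theorem isFactorable (hw : IsWeaklyFactorable E η) (hr : RecognitionPrinciple E η)
    (hgen : IsGenSet E) (h1 : (1 : M) ∉ E) : IsFactorable E η := by
  have hη := hw.isFactorizationMap
  refine ⟨hη, fun p => ?_⟩
  by_cases hp : IsGeodesicTriple E p
  · left
    rw [hw.f2_f1_f2_eq_normalTriple hgen h1 hp,
      hw.f2_f1_f2_eq_normalTriple hgen h1 (hη.isGeodesicTriple_f1 hgen hp), hη.tripleProd_f1]
    exact ⟨hr.f1_normalTriple hη _, rfl⟩
  · have hlt := hw.tnorm_f2_f1_f2_lt hgen h1 hp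
    exact .inr ⟨(hη.tnorm_f1_le hgen _).trans_lt hlt, hlt, hw.tnorm_f2_f1_f2_f1_lt hgen h1 hp⟩

theorem apply_mul_of_apply_snd_mul (hw : IsWeaklyFactorable E η) {m a : M} (ha : a ∈ E)
    (h : η ((η m).2 * a) = ((η m).2, a)) : η (m * a) = (m, a) := by
  have hη := hw.isFactorizationMap
  have hsnd : Geodesic E (η m).2 a := by simpa only [h] using hη.geodesic_fst_snd ((η m).2 * a)
  have hfst : Geodesic E (η m).1 (η ((η m).2 * a)).1 := by
    rw [h]
    exact hη.geodesic_fst_snd m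
  rw [(hw.geodesic_and_apply_mul_of_mem ha hsnd hfst).2, h, hη.fst_mul_snd]

theorem recognitionPrinciple (hw : IsWeaklyFactorable E η) (hgen : IsGenSet E)
    (hrc : ∀ a b c : M, a * c = b * c → a = b) : RecognitionPrinciple E η := by
  have hη := hw.isFactorizationMap
  refine fun m a ha => ⟨fun h => ?_, hw.apply_mul_of_apply_snd_mul ha⟩
  have hma : Geodesic E m a := by simpa only [h] using hη.geodesic_fst_snd (m * a)
  obtain ⟨hsnd, hfst⟩ := hη.geodesic_of_geodesic_mul hgen hma
  have hright : (η ((η m).2 * a)).2 = a := by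
    rw [← (hw.2 m a ha hsnd hfst).2.1, h]
  have hmul := hη.fst_mul_snd ((η m).2 * a)
  rw [hright] at hmul
  exact Prod.ext (hrc _ _ _ hmul) hright

end IsWeaklyFactorable

namespace IsFactorable

variable {M : Type*} [Monoid M] {E : Set M} {η : M → M × M}

theorem isFactorizationMap (hf : IsFactorable E η) : IsFactorizationMap E η :=
  hf.1

theorem f1_f2_f1_f2_eq (hf : IsFactorable E η) {p : M × M × M}
    (hp : tnorm E (f2 η (f1 η (f2 η p))) = tnorm E p) :
    f1 η (f2 η (f1 η (f2 η p))) = f2 η (f1 η (f2 η p)) :=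
  ((hf.2 p).resolve_right fun hlt => hlt.2.1.ne hp).1

theorem f2_f1_f2_eq (hf : IsFactorable E η) {p : M × M × M}
    (hp : tnorm E (f2 η (f1 η (f2 η (f1 η p)))) = tnorm E p) :
    f2 η (f1 η (f2 η p)) = f2 η (f1 η (f2 η (f1 η p))) :=
  ((hf.2 p).resolve_right fun hlt => hlt.2.2.ne hp).2

theorem f1_normalTriple (hf : IsFactorable E η) (hgen : IsGenSet E) (h1 : (1 : M) ∉ E) (m : M) :
    f1 η (normalTriple η m) = normalTriple η m := by
  have hη := hf.isFactorizationMap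
  have hm : f2 η (f1 η (f2 η (m, 1, 1))) = normalTriple η m := by
    rw [hη.f2_f1_f2_mk_one hgen h1, mul_one]
  rw [← hm]
  refine hf.f1_f2_f1_f2_eq ?_
  rw [hm, hη.tnorm_normalTriple]
  simp only [tnorm, wordLength_one, add_zero]

theorem apply_mul (hf : IsFactorable E η) (hgen : IsGenSet E) (h1 : (1 : M) ∉ E) {x t : M}
    (ht : t ∈ E) (hsnd : Geodesic E (η x).2 t) (hfst : Geodesic E (η x).1 (η ((η x).2 * t)).1) :
    η (x * t) = ((η x).1 * (η ((η x).2 * t)).1, (η ((η x).2 * t)).2) := by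
  have hη := hf.isFactorizationMap
  have hf2f1 : f2 η (f1 η (x, t, 1)) = ((η x).1, (η x).2, t) := by
    simp only [f1, f2, mul_one, hη.apply_of_mem hgen h1 ht]
  have hnorm : tnorm E (f2 η (f1 η (f2 η (f1 η (x, t, 1))))) = tnorm E (x, t, 1) :=
    calc tnorm E (f2 η (f1 η (f2 η (f1 η (x, t, 1)))))
        = tnorm E (f2 η (f1 η ((η x).1, (η x).2, t))) := by rw [hf2f1]
      _ = tnorm E (f1 η ((η x).1, (η x).2, t)) := hη.tnorm_f2_eq_iff.mpr hfst
      _ = tnorm E ((η x).1, (η x).2, t) := hη.tnorm_f1_eq_iff.mpr hsnd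
      _ = tnorm E (x, t, 1) := by
        simp only [tnorm, hη.wordLength_fst_add_snd, wordLength_one, add_zero]
  have hnormal := hf.f2_f1_f2_eq hnorm
  rw [hη.f2_f1_f2_mk_one hgen h1, hf2f1] at hnormal
  exact hη.apply_eq_of_normalTriple_eq_f2 hnormal

theorem isWeaklyFactorable (hf : IsFactorable E η) (hgen : IsGenSet E) (h1 : (1 : M) ∉ E) :
    IsWeaklyFactorable E η := by
  have hη := hf.isFactorizationMap
  refine ⟨hη, fun x t ht hsnd hfst => ?_⟩
  have happly := hf.apply_mul hgen h1 ht hsnd hfst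
  have hsplit : Geodesic E ((η x).1 * (η ((η x).2 * t)).1) (η ((η x).2 * t)).2 := by
    simpa only [happly] using hη.geodesic_fst_snd (x * t)
  have hx_fst : Geodesic E (η x).1 ((η x).2 * t) := by
    simpa only [hη.fst_mul_snd] using (hgen.geodesic_assoc.mp ⟨hfst, hsplit⟩).2
  have hxt : Geodesic E x t := by
    simpa only [hη.fst_mul_snd] using (hgen.geodesic_assoc.mpr ⟨hsnd, hx_fst⟩).2
  exact ⟨hxt, by rw [happly], by rw [happly]⟩

theorem recognitionPrinciple (hf : IsFactorable E η) (hgen : IsGenSet E) (h1 : (1 : M) ∉ E) :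
    RecognitionPrinciple E η := by
  refine fun m a ha =>
    ⟨fun h => ?_, (hf.isWeaklyFactorable hgen h1).apply_mul_of_apply_snd_mul ha⟩
  have hfix := hf.f1_normalTriple hgen h1 (m * a)
  simp only [normalTriple, f1, h, Prod.mk.injEq, true_and] at hfix
  exact hfix

end IsFactorable

theorem factorable_iff_weaklyFactorable_of_rightCancellative_general
    {M : Type*} [Monoid M] {E : Set M} {η : M → M × M} (hgen : IsGenSet E) (h1 : (1 : M) ∉ E) :
    IsFactorable E η ↔ IsWeaklyFactorable E η ∧ RecognitionPrinciple E η :=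
  ⟨fun hf => ⟨hf.isWeaklyFactorable hgen h1, hf.recognitionPrinciple hgen h1⟩,
    fun ⟨hw, hr⟩ => hw.isFactorable hr hgen h1⟩

/-- Let `M` be a right-cancellative monoid and `E ⊆ M∖{1}` a generating set. Then a
factorization map `η` on `(M, E)` is a factorability structure if and only if it is a
weak factorability structure. -/
theorem factorable_iff_weaklyFactorable_of_rightCancellative
    {M : Type*} [Monoid M] (hrc : ∀ a b c : M, a * c = b * c → a = b)
    (E : Set M) (h1 : (1 : M) ∉ E) (hgen : IsGenSet E)
    (η : M → M × M) (hη : IsFactorizationMap E η) :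
    IsFactorable E η ↔ IsWeaklyFactorable E η := by
  rw [factorable_iff_weaklyFactorable_of_rightCancellative_general hgen h1]
  exact and_iff_left_of_imp fun hw => hw.recognitionPrinciple hgen hrc
end

section
/- For every n ≥ 1, in the monoid Q_n' the following equivalences hold: I₁ⁿ·I₁ⁿ ∼ I₂ⁿ·I₁ⁿ, and more generally the n-fold power (I₁ⁿ)ⁿ is ∼-equivalent to D_n = I_nⁿ·I_{n−1}ⁿ⋯I₂ⁿ·I₁ⁿ. -/
/-- `w` is a word of the free monoid `F_n` on the letters `{1, …, n}`. -/
def InF (n : ℕ) (w : List ℕ) : Prop := ∀ a ∈ w, 1 ≤ a ∧ a ≤ n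

/-- The congruence on a free monoid of words generated by a relation `r`. -/
inductive CongClosure (r : List ℕ → List ℕ → Prop) : List ℕ → List ℕ → Prop
  | rel (u v : List ℕ) {x y : List ℕ} : r x y → CongClosure r (u ++ x ++ v) (u ++ y ++ v)
  | refl (x : List ℕ) : CongClosure r x x
  | symm {x y : List ℕ} : CongClosure r x y → CongClosure r y x
  | trans {x y z : List ℕ} : CongClosure r x y → CongClosure r y z → CongClosure r x z

/-- The defining relations of `P_n`: `ab = ba` for `|a − b| ≥ 2`, and `aa = a`. -/
inductive PRel (n : ℕ) : List ℕ → List ℕ → Prop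
  | comm (a b : ℕ) : 1 ≤ a → a ≤ n → 1 ≤ b → b ≤ n → (a + 2 ≤ b ∨ b + 2 ≤ a) →
      PRel n [a, b] [b, a]
  | idem (a : ℕ) : 1 ≤ a → a ≤ n → PRel n [a, a] [a]

/-- The congruence `∼_P` on `F_n`. -/
def PCong (n : ℕ) : List ℕ → List ℕ → Prop := CongClosure (PRel n)

/-- The defining relations of `Q_n`: those of `P_n` together with
`k(k+1)k(k+1) = (k+1)k(k+1)` and `(k+1)k(k+1)k = (k+1)k(k+1)`. -/
inductive QRel (n : ℕ) : List ℕ → List ℕ → Prop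
  | ofP {x y : List ℕ} : PRel n x y → QRel n x y
  | braid1 (k : ℕ) : 1 ≤ k → k + 1 ≤ n → QRel n [k, k + 1, k, k + 1] [k + 1, k, k + 1]
  | braid2 (k : ℕ) : 1 ≤ k → k + 1 ≤ n → QRel n [k + 1, k, k + 1, k] [k + 1, k, k + 1]

/-- The congruence `∼_Q` on `F_n`. -/
def QCong (n : ℕ) : List ℕ → List ℕ → Prop := CongClosure (QRel n)

/-- The defining relations of `Q_n'`: those of `Q_n` together with the pairs `(kJ, J)`
for which there exists `I ∈ F_n` with `kIJ ∼_Q IJ`, `kI ∼_P Ik` and `k` not occurring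
in `I`. -/
inductive RRel (n : ℕ) : List ℕ → List ℕ → Prop
  | ofQ {x y : List ℕ} : QRel n x y → RRel n x y
  | absorb (k : ℕ) (I J : List ℕ) : 1 ≤ k → k ≤ n → InF n I → InF n J →
      QCong n ((k :: I) ++ J) (I ++ J) → PCong n (k :: I) (I ++ [k]) → k ∉ I →
      RRel n (k :: J) J

/-- The congruence `∼` on `F_n`; the quotient monoid `F_n/∼` is `Q_n'`. -/
def RCong (n : ℕ) : List ℕ → List ℕ → Prop := CongClosure (RRel n)

/-- The shift homomorphism `sh_k : F_{n−k} → F_n`, `i ↦ i + k`. -/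
def sh (k : ℕ) (w : List ℕ) : List ℕ := w.map (· + k)

/-- The word `I_a^b = a·(a+1)⋯b`. -/
def Iseg (a b : ℕ) : List ℕ := List.range' a (b + 1 - a)

/-- The word `D_k = I_k^k · I_{k−1}^k ⋯ I_2^k · I_1^k`. -/
def Dword (k : ℕ) : List ℕ := ((List.range k).map (fun i => Iseg (k - i) k)).flatten

/-!
The word `D_n` represents the zero of `Q_n`. Write `E` for the shift of `D_{n+1}` by one and `F` for
the shift of `D_n` by two. Inductively, `E` is a zero for the letters `2, …, n + 2` and
`E ∼ F · 2 · F`, while the letter `1` commutes with `F`. Hence `D_{n+2} ∼ E · 1 · E`, and the two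
braid relations between `1` and `2` let this element absorb `1` on both sides.

Now `D_{n+2} = F · J` with `J = I₂ⁿ⁺² · I₁ⁿ⁺²`, and `1` commutes with `F` without occurring in it,
so the additional relations of `Q_{n+2}'` yield `1 · J ∼ J`, that is `I₁ⁿ⁺² · I₁ⁿ⁺² ∼ J`. Iterating
turns `(I₁ⁿ⁺¹)ⁿ⁺¹` into `(I₂ⁿ⁺¹)ⁿ · I₁ⁿ⁺¹`, whose first factor is the shift of `(I₁ⁿ)ⁿ`.
-/

namespace CongClosure

variable {r s : List ℕ → List ℕ → Prop} {u v x y : List ℕ}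

theorem of_rel (h : r x y) : CongClosure r x y := by
  simpa using rel [] [] h

theorem append_left (u : List ℕ) (h : CongClosure r x y) :
    CongClosure r (u ++ x) (u ++ y) := by
  induction h with
  | rel a b h => simpa only [List.append_assoc] using rel (u ++ a) b h
  | refl x => exact refl _
  | symm _ ih => exact ih.symm
  | trans _ _ ih₁ ih₂ => exact ih₁.trans ih₂

theorem append_right (v : List ℕ) (h : CongClosure r x y) :
    CongClosure r (x ++ v) (y ++ v) := by
  induction h with
  | rel a b h => simpa only [List.append_assoc] using rel a (b ++ v) h
  | refl x => exact refl _
  | symm _ ih => exact ih.symm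
  | trans _ _ ih₁ ih₂ => exact ih₁.trans ih₂

theorem mono (hrs : ∀ {x y}, r x y → s x y) (h : CongClosure r x y) : CongClosure s x y := by
  induction h with
  | rel u v h => exact rel u v (hrs h)
  | refl x => exact refl x
  | symm _ ih => exact ih.symm
  | trans _ _ ih₁ ih₂ => exact ih₁.trans ih₂

theorem map (f : ℕ → ℕ) (hf : ∀ {x y}, r x y → s (x.map f) (y.map f))
    (h : CongClosure r x y) : CongClosure s (x.map f) (y.map f) := by
  induction h with
  | rel u v h => simpa only [List.map_append] using rel (u.map f) (v.map f) (hf h)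
  | refl x => exact refl _
  | symm _ ih => exact ih.symm
  | trans _ _ ih₁ ih₂ => exact ih₁.trans ih₂

theorem flatten_replicate_succ (h : CongClosure r (u ++ u) (v ++ u)) (m : ℕ) :
    CongClosure r (List.replicate (m + 1) u).flatten ((List.replicate m v).flatten ++ u) := by
  induction m with
  | zero => simpa using refl u
  | succ m ih =>
    have huu := (h.append_right (List.replicate m u).flatten).trans
      (by simpa [List.replicate_succ] using ih.append_left v)
    simpa [List.replicate_succ] using huu

variable (r) in
/-- The generated congruence as a `Con` on the free monoid, which makes the quotient a `Monoid`. -/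
def con : Con (FreeMonoid ℕ) where
  r u v := CongClosure r u.toList v.toList
  iseqv := ⟨fun _ => refl _, symm, trans⟩
  mul' h₁ h₂ := (h₁.append_right _).trans (h₂.append_left _)

variable (r) in
/-- The class of a word in the quotient monoid, used to turn equivalences of words into equations
in a monoid. -/
def mk (w : List ℕ) : (con r).Quotient := (FreeMonoid.ofList w : FreeMonoid ℕ)

theorem mk_append (u v : List ℕ) : mk r (u ++ v) = mk r u * mk r v := rfl

theorem mk_eq_mk : mk r u = mk r v ↔ CongClosure r u v := Con.eq _

end CongClosure

open CongClosure (mk mk_append mk_eq_mk)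

theorem PCong.toQCong {n : ℕ} {u v : List ℕ} (h : PCong n u v) : QCong n u v :=
  h.mono QRel.ofP

section Words

theorem InF.append {n : ℕ} {u v : List ℕ} (hu : InF n u) (hv : InF n v) : InF n (u ++ v) :=
  fun a ha => (List.mem_append.1 ha).elim (hu a) (hv a)

theorem InF.shift {n : ℕ} {w : List ℕ} (hw : InF n w) (k : ℕ) : InF (n + k) (sh k w) := by
  intro a ha
  obtain ⟨b, hb, rfl⟩ := List.mem_map.1 ha
  have := hw b hb
  omega

theorem inF_Iseg {a : ℕ} (ha : 1 ≤ a) (n : ℕ) : InF n (Iseg a n) := by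
  intro k hk
  rw [Iseg, List.mem_range'_1] at hk
  omega

theorem Iseg_eq_cons {a b : ℕ} (h : a ≤ b) : Iseg a b = a :: Iseg (a + 1) b := by
  rw [Iseg, Iseg, show b + 1 - a = (b + 1 - (a + 1)) + 1 by omega, List.range'_succ]

theorem sh_append (k : ℕ) (u v : List ℕ) : sh k (u ++ v) = sh k u ++ sh k v :=
  List.map_append

theorem sh_sh (k l : ℕ) (w : List ℕ) : sh l (sh k w) = sh (k + l) w := by
  simp [sh, Function.comp_def, add_assoc]

theorem sh_flatten_replicate (k m : ℕ) (w : List ℕ) :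
    sh k (List.replicate m w).flatten = (List.replicate m (sh k w)).flatten := by
  simp [sh, List.map_flatten]

theorem sh_Iseg (k a b : ℕ) : sh k (Iseg a b) = Iseg (a + k) (b + k) := by
  rw [sh, Iseg, Iseg, show b + k + 1 - (a + k) = b + 1 - a by omega]
  simp only [add_comm _ k, List.map_add_range']

theorem Dword_succ (n : ℕ) : Dword (n + 1) = sh 1 (Dword n) ++ Iseg 1 (n + 1) := by
  have hshift : ∀ i ∈ List.range n, Iseg (n + 1 - i) (n + 1) = sh 1 (Iseg (n - i) n) := by
    intro i hi
    rw [sh_Iseg, Nat.sub_add_comm (List.mem_range.1 hi).le]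
  rw [Dword, List.range_succ, List.map_append, List.flatten_append, List.map_congr_left hshift]
  simp [Dword, sh, List.map_flatten, Function.comp_def]

theorem inF_Dword (n : ℕ) : InF n (Dword n) := by
  induction n with
  | zero => simp [InF, Dword]
  | succ n ih =>
    rw [Dword_succ]
    exact (ih.shift 1).append (inF_Iseg le_rfl _)

end Words

section Shift

variable {n : ℕ} {u v : List ℕ}

theorem PRel.shift (h : PRel n u v) (k : ℕ) : PRel (n + k) (sh k u) (sh k v) := by
  cases h with
  | comm a b => exact .comm (a + k) (b + k) (by omega) (by omega) (by omega) (by omega) (by omega)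
  | idem a => exact .idem (a + k) (by omega) (by omega)

theorem PCong.shift (h : PCong n u v) (k : ℕ) : PCong (n + k) (sh k u) (sh k v) :=
  h.map _ (PRel.shift · k)

theorem QRel.shift (h : QRel n u v) (k : ℕ) : QRel (n + k) (sh k u) (sh k v) := by
  cases h with
  | ofP h => exact .ofP (h.shift k)
  | braid1 a =>
    simpa [sh, add_right_comm] using QRel.braid1 (n := n + k) (a + k) (by omega) (by omega)
  | braid2 a =>
    simpa [sh, add_right_comm] using QRel.braid2 (n := n + k) (a + k) (by omega) (by omega)

theorem QCong.shift (h : QCong n u v) (k : ℕ) : QCong (n + k) (sh k u) (sh k v) :=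
  h.map _ (QRel.shift · k)

theorem RRel.shift (h : RRel n u v) (k : ℕ) : RRel (n + k) (sh k u) (sh k v) := by
  cases h with
  | ofQ h => exact .ofQ (h.shift k)
  | absorb a I _ ha han hI hJ hIJ hcomm hnot =>
    refine .absorb (a + k) (sh k I) _ (by omega) (by omega) (hI.shift k) (hJ.shift k) ?_ ?_ ?_
    · simpa [sh] using hIJ.shift k
    · simpa [sh] using hcomm.shift k
    · simpa [sh] using hnot

theorem RCong.shift (h : RCong n u v) (k : ℕ) : RCong (n + k) (sh k u) (sh k v) :=
  h.map _ (RRel.shift · k)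

end Shift

section Sandwich

variable {M : Type*} [Monoid M] {a b e f : M}

theorem mul_sandwich_eq (hbraid : a * (b * (a * b)) = b * (a * b)) (hcomm : Commute a f)
    (he : e = f * b * f) (hfe : f * e = e) (hbe : b * e = e) :
    a * (e * a * e) = e * a * e := by
  have heae : e * a * e = f * (b * a) * e := calc
    e * a * e = f * b * f * a * e := by rw [← he]
    _ = f * b * (f * a) * e := by simp only [mul_assoc]
    _ = f * (b * a) * (f * e) := by simp only [← hcomm.eq, mul_assoc]
    _ = f * (b * a) * e := by rw [hfe]
  calc a * (e * a * e) = a * f * (b * a) * e := by simp only [heae, mul_assoc]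
    _ = f * a * (b * a) * (b * e) := by rw [hcomm.eq, hbe]
    _ = f * (a * (b * (a * b))) * e := by simp only [mul_assoc]
    _ = f * (b * a) * (b * e) := by rw [hbraid]; simp only [mul_assoc]
    _ = e * a * e := by rw [hbe, heae]

theorem sandwich_mul_eq (hbraid : b * (a * (b * a)) = b * (a * b)) (hcomm : Commute a f)
    (he : e = f * b * f) (hef : e * f = e) (heb : e * b = e) :
    e * a * e * a = e * a * e := by
  open MulOpposite in
  apply op_injective
  simpa [mul_assoc] using mul_sandwich_eq (a := op a) (b := op b) (e := op e) (f := op f)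
    (by simpa [mul_assoc] using congrArg op hbraid) hcomm.op (by simp [he, mul_assoc])
    (by rw [← op_mul, hef]) (by rw [← op_mul, heb])

end Sandwich

theorem PCong.cons_of_far {n a : ℕ} {w : List ℕ} (ha : 1 ≤ a) (han : a ≤ n) (hw : InF n w)
    (hfar : ∀ b ∈ w, a + 2 ≤ b ∨ b + 2 ≤ a) : PCong n (a :: w) (w ++ [a]) := by
  induction w with
  | nil => exact .refl _
  | cons b w ih =>
    rw [InF, List.forall_mem_cons] at hw
    rw [List.forall_mem_cons] at hfar
    have hab : PCong n [a, b] [b, a] := .of_rel (.comm a b ha han hw.1.1 hw.1.2 hfar.1)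
    exact (hab.append_right w).trans ((ih hw.2 hfar.2).append_left [b])

theorem PCong.one_cons_sh_two {n : ℕ} {w : List ℕ} (hw : InF n w) :
    PCong (n + 2) (1 :: sh 2 w) (sh 2 w ++ [1]) := by
  refine .cons_of_far le_rfl (by omega) (hw.shift 2) fun b hb => ?_
  obtain ⟨c, hc, rfl⟩ := List.mem_map.1 hb
  have := hw c hc
  omega

/-- The word `z` represents a zero of `Q_n`, i.e. it absorbs every word of `F_n` on both sides. -/
def IsZeroWord (n : ℕ) (z : List ℕ) : Prop :=
  ∀ w, InF n w → QCong n (w ++ z) z ∧ QCong n (z ++ w) z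

theorem isZeroWord_of_letters {n : ℕ} {z : List ℕ}
    (h : ∀ a, 1 ≤ a → a ≤ n → QCong n (a :: z) z ∧ QCong n (z ++ [a]) z) : IsZeroWord n z := by
  intro w hw
  induction w with
  | nil => simpa [QCong] using CongClosure.refl z
  | cons a w ih =>
    rw [InF, List.forall_mem_cons] at hw
    obtain ⟨hwz, hzw⟩ := ih hw.2
    obtain ⟨haz, hza⟩ := h a hw.1.1 hw.1.2
    exact ⟨(hwz.append_left [a]).trans haz, by simpa [QCong] using (hza.append_right w).trans hzw⟩

theorem IsZeroWord.shift {n : ℕ} {w z : List ℕ} (hz : IsZeroWord n z) (hw : InF n w) (k : ℕ) :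
    QCong (n + k) (sh k w ++ sh k z) (sh k z) ∧ QCong (n + k) (sh k z ++ sh k w) (sh k z) := by
  rw [← sh_append, ← sh_append]
  exact (hz w hw).imp (·.shift k) (·.shift k)

theorem qCong_Dword_succ_sandwich {n : ℕ} (hzero : IsZeroWord n (Dword n)) :
    QCong (n + 1) (Dword (n + 1)) (sh 1 (Dword n) ++ [1] ++ sh 1 (Dword n)) := by
  cases n with
  | zero => exact .refl _
  | succ n =>
    let q := mk (QRel (n + 2))
    let E := sh 1 (Dword (n + 1))
    let F := sh 2 (Dword n)
    let J := Iseg 2 (n + 2)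
    have hE : q E = q F * q J := by
      refine (congrArg q ?_).trans (mk_append F J)
      simp only [E, Dword_succ, sh_append, sh_sh, sh_Iseg, F, J]
    have hEF : q E * q F = q E := by
      have h := (hzero.shift ((inF_Dword n).shift 1) 1).2
      rw [sh_sh] at h
      exact mk_eq_mk.2 h
    have hcomm : q [1] * q F = q F * q [1] :=
      mk_eq_mk.2 (PCong.one_cons_sh_two (inF_Dword n)).toQCong
    refine mk_eq_mk.1 ?_
    calc q (Dword (n + 2)) = q E * (q [1] * q J) := by
          rw [Dword_succ, Iseg_eq_cons (by omega)]; rfl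
      _ = (q E * q F) * (q [1] * q J) := by rw [hEF]
      _ = q E * (q F * q [1]) * q J := by simp only [mul_assoc]
      _ = q E * q [1] * (q F * q J) := by simp only [← hcomm, mul_assoc]
      _ = q E * q [1] * q E := by rw [hE]

theorem qCong_Dword_absorb_one {n : ℕ} (hzero : IsZeroWord n (Dword n))
    (hzero_succ : IsZeroWord (n + 1) (Dword (n + 1))) :
    QCong (n + 2) (1 :: Dword (n + 2)) (Dword (n + 2)) ∧
      QCong (n + 2) (Dword (n + 2) ++ [1]) (Dword (n + 2)) := by
  let q := mk (QRel (n + 2))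
  let E := sh 1 (Dword (n + 1))
  let F := sh 2 (Dword n)
  have hD : q (Dword (n + 2)) = q E * q [1] * q E :=
    mk_eq_mk.2 (qCong_Dword_succ_sandwich hzero_succ)
  have hE : q E = q F * q [2] * q F := by
    have h := (qCong_Dword_succ_sandwich hzero).shift 1
    simp only [sh_append, sh_sh] at h
    exact mk_eq_mk.2 h
  obtain ⟨hFE, hEF⟩ : q F * q E = q E ∧ q E * q F = q E := by
    have h := hzero_succ.shift ((inF_Dword n).shift 1) 1
    rw [sh_sh] at h
    exact h.imp mk_eq_mk.2 mk_eq_mk.2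
  obtain ⟨h2E, hE2⟩ : q [2] * q E = q E ∧ q E * q [2] = q E :=
    (hzero_succ.shift (w := [1]) (by simp [InF]) 1).imp mk_eq_mk.2 mk_eq_mk.2
  have hcomm : Commute (q [1]) (q F) :=
    mk_eq_mk.2 (PCong.one_cons_sh_two (inF_Dword n)).toQCong
  have hbraid₁ : q [1] * (q [2] * (q [1] * q [2])) = q [2] * (q [1] * q [2]) :=
    mk_eq_mk.2 (.of_rel (.braid1 1 le_rfl (by omega)))
  have hbraid₂ : q [2] * (q [1] * (q [2] * q [1])) = q [2] * (q [1] * q [2]) :=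
    mk_eq_mk.2 (.of_rel (.braid2 1 le_rfl (by omega)))
  suffices q [1] * q (Dword (n + 2)) = q (Dword (n + 2)) ∧
      q (Dword (n + 2)) * q [1] = q (Dword (n + 2)) from this.imp mk_eq_mk.1 mk_eq_mk.1
  rw [hD]
  exact ⟨mul_sandwich_eq hbraid₁ hcomm hE hFE h2E, sandwich_mul_eq hbraid₂ hcomm hE hEF hE2⟩

theorem qCong_Dword_absorb_succ {n a : ℕ} (hzero : IsZeroWord n (Dword n)) (ha : 1 ≤ a)
    (han : a ≤ n) :
    QCong (n + 1) ((a + 1) :: Dword (n + 1)) (Dword (n + 1)) ∧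
      QCong (n + 1) (Dword (n + 1) ++ [a + 1]) (Dword (n + 1)) := by
  let q := mk (QRel (n + 1))
  let E := sh 1 (Dword n)
  have hD : q (Dword (n + 1)) = q E * q [1] * q E := mk_eq_mk.2 (qCong_Dword_succ_sandwich hzero)
  obtain ⟨haE, hEa⟩ : q [a + 1] * q E = q E ∧ q E * q [a + 1] = q E :=
    (hzero.shift (w := [a]) (by simp [InF, ha, han]) 1).imp mk_eq_mk.2 mk_eq_mk.2
  suffices q [a + 1] * q (Dword (n + 1)) = q (Dword (n + 1)) ∧
      q (Dword (n + 1)) * q [a + 1] = q (Dword (n + 1)) from this.imp mk_eq_mk.1 mk_eq_mk.1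
  rw [hD]
  exact ⟨by simp only [← mul_assoc, haE], by rw [mul_assoc, hEa]⟩

theorem isZeroWord_Dword : ∀ n, IsZeroWord n (Dword n)
  | 0 => isZeroWord_of_letters fun _ _ _ => by omega
  | 1 => isZeroWord_of_letters fun a ha han => by
    obtain rfl : a = 1 := le_antisymm han ha
    have h : QCong 1 [1, 1] [1] := .of_rel (.ofP (.idem 1 le_rfl le_rfl))
    exact ⟨h, h⟩
  | n + 2 => isZeroWord_of_letters fun
    | 1, _, _ => qCong_Dword_absorb_one (isZeroWord_Dword n) (isZeroWord_Dword (n + 1))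
    | a + 2, _, han => qCong_Dword_absorb_succ (isZeroWord_Dword (n + 1)) (by omega) (by omega)

theorem rCong_Iseg_one_append_self {n : ℕ} (hn : 1 ≤ n) :
    RCong n (Iseg 1 n ++ Iseg 1 n) (Iseg 2 n ++ Iseg 1 n) := by
  obtain rfl | ⟨m, rfl⟩ : n = 1 ∨ ∃ m, n = m + 2 := by
    rcases hn.eq_or_lt with h | h
    · exact .inl h.symm
    · exact .inr ⟨n - 2, by omega⟩
  · exact .of_rel (.ofQ (.ofP (.idem 1 le_rfl le_rfl)))
  · let J := Iseg 2 (m + 2) ++ Iseg 1 (m + 2)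
    have hD : Dword (m + 2) = sh 2 (Dword m) ++ J := by
      simp [Dword_succ, sh_append, sh_sh, sh_Iseg, J]
    have hJ : InF (m + 2) J := (inF_Iseg one_le_two _).append (inF_Iseg le_rfl _)
    have habsorb : QCong (m + 2) (1 :: sh 2 (Dword m) ++ J) (sh 2 (Dword m) ++ J) := by
      have h := (isZeroWord_Dword (m + 2) [1] (by simp [InF])).1
      rwa [hD] at h
    have hnot : 1 ∉ sh 2 (Dword m) := by simp [sh]
    have h : RRel (m + 2) (1 :: J) J := .absorb 1 _ _ le_rfl hn ((inF_Dword m).shift 2) hJ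
      habsorb (.one_cons_sh_two (inF_Dword m)) hnot
    nth_rw 1 [Iseg_eq_cons hn]
    exact .of_rel h

theorem rCong_flatten_replicate_Iseg_one (n : ℕ) :
    RCong n (List.replicate n (Iseg 1 n)).flatten (Dword n) := by
  induction n with
  | zero => exact .refl _
  | succ n ih =>
    have hpow := (rCong_Iseg_one_append_self n.succ_pos).flatten_replicate_succ n
    have hshift : RCong (n + 1) (List.replicate n (Iseg 2 (n + 1))).flatten (sh 1 (Dword n)) := by
      simpa only [sh_flatten_replicate, sh_Iseg] using ih.shift 1
    rw [Dword_succ]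
    exact hpow.trans (hshift.append_right _)

/-- For every `n ≥ 1`, in `Q_n'` one has `I₁ⁿ·I₁ⁿ ∼ I₂ⁿ·I₁ⁿ`, and the `n`-fold power
`(I₁ⁿ)ⁿ` is `∼`-equivalent to `D_n = I_nⁿ·I_{n−1}ⁿ⋯I₂ⁿ·I₁ⁿ`. -/
theorem Iseg_pow_equiv_D (n : ℕ) (hn : 1 ≤ n) :
    RCong n (Iseg 1 n ++ Iseg 1 n) (Iseg 2 n ++ Iseg 1 n) ∧
    RCong n ((List.replicate n (Iseg 1 n)).flatten) (Dword n) :=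
  ⟨rCong_Iseg_one_append_self hn, rCong_flatten_replicate_Iseg_one n⟩
end
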